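/- For every integer k ≥ 2, as N → ∞, ∑_{k-free n ≥ 1 : every prime factor of n is ≤ N} 1/( n_{(k−1)-free} · φ(n_{(k−1)-power}) ) ∼ e^γ · log N, i.e. the ratio of the two sides tends to 1. -/

import Mathlib

open Filter
open scoped Classical

/-- `n` is `k`-free: no `k`-th power of a prime divides `n`. -/
def KFree (k n : ℕ) : Prop := ∀ p : ℕ, p.Prime → ¬ p ^ k ∣ n

/-- The `m`-free part of `n`: each prime `p` appearing with exponent `e` in `n` contributes
`p ^ (e % m)`.  In particular the `1`-free part of any `n` is `1`. -/
def freePart (m n : ℕ) : ℕ := n.factorization.prod fun p e => p ^ (e % m)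

/-- The `m`-power part of `n`: each prime `p` appearing with exponent `e` in `n` contributes
`p ^ (m * (e / m))`, so the result is a perfect `m`-th power, and
`n = freePart m n * powerPart m n`.  In particular the `1`-power part of `n` is `n` itself. -/
def powerPart (m n : ℕ) : ℕ := n.factorization.prod fun p e => p ^ (m * (e / m))

/-!
For a prime `p` the Euler factor of the sum is finite: the powers `p ^ e` with `e < k - 1`
contribute `p⁻ᵉ`, and `p ^ (k - 1)` contributes `p⁻⁽ᵏ⁻¹⁾ (1 - 1/p)⁻¹`, exactly the missing tail of
the geometric series. Hence the sum equals `∏_{p ≤ N} (1 - 1/p)⁻¹` for every `k ≥ 2`, and the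
claim is Mertens' third theorem.

Chebyshev's bound and Stirling's formula, applied to `log N!`, give
`∑_{p ≤ N} log p / p = log N + O(1)`. Comparing with `∑ 1 / n` and dividing the terms by `log n`,
Dirichlet's test shows that `∑_{p ≤ N} 1 / p - log log N` converges to some `M`. To find `M`, view
`∑ p⁻¹ e^(-δ log p)` and `∑ n⁻¹ e^(-δ n)` as Dirichlet series with frequencies `log p` and `n`:
their summatory functions at `u` are `log u + M + o(1)` and `log u + γ + o(1)`, so by Abel's
theorem the difference of the two series tends to `M - γ` as `δ → 0⁺`. The first series is
`log ζ(1 + δ) = -log δ + o(1)` up to the terms of order at least two in the logarithm of the Euler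
product, and the second is `-log (1 - e^(-δ))`.
-/

section KFreePart

variable {k m n p e a b : ℕ}

lemma freePart_one (m : ℕ) : freePart m 1 = 1 := by simp [freePart]

lemma powerPart_one (m : ℕ) : powerPart m 1 = 1 := by simp [powerPart]

lemma freePart_mul_of_coprime (h : a.Coprime b) :
    freePart m (a * b) = freePart m a * freePart m b := by
  rw [freePart, Nat.factorization_mul_of_coprime h, Finsupp.prod_add_index_of_disjoint] <;>
    [rfl; simpa using h.disjoint_primeFactors]

lemma powerPart_mul_of_coprime (h : a.Coprime b) :
    powerPart m (a * b) = powerPart m a * powerPart m b := by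
  rw [powerPart, Nat.factorization_mul_of_coprime h, Finsupp.prod_add_index_of_disjoint] <;>
    [rfl; simpa using h.disjoint_primeFactors]

lemma powerPart_dvd (m : ℕ) (hn : n ≠ 0) : powerPart m n ∣ n := by
  conv_rhs => rw [← Nat.prod_factorization_pow_eq_self hn]
  exact Finset.prod_dvd_prod_of_dvd _ _ fun _ _ => pow_dvd_pow _ (Nat.mul_div_le _ _)

lemma freePart_prime_pow (m e : ℕ) (hp : p.Prime) : freePart m (p ^ e) = p ^ (e % m) := by
  rw [freePart, hp.factorization_pow, Finsupp.prod_single_index (by simp)]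

lemma powerPart_prime_pow (m e : ℕ) (hp : p.Prime) :
    powerPart m (p ^ e) = p ^ (m * (e / m)) := by
  rw [powerPart, hp.factorization_pow, Finsupp.prod_single_index (by simp)]

lemma KFree.ne_zero (h : KFree k n) : n ≠ 0 := by
  rintro rfl
  exact h 2 Nat.prime_two (dvd_zero _)

lemma kFree_one (hk : k ≠ 0) : KFree k 1 := fun _ hp h =>
  hp.one_lt.ne' ((Nat.pow_eq_one.1 (Nat.dvd_one.1 h)).resolve_right hk)

lemma kFree_mul_iff_of_coprime (hk : k ≠ 0) (h : a.Coprime b) :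
    KFree k (a * b) ↔ KFree k a ∧ KFree k b := by
  simp only [KFree, ← forall_and]
  refine forall₂_congr fun p hp => ?_
  rw [h.isPrimePow_dvd_mul (hp.isPrimePow.pow hk), not_or]

lemma kFree_prime_pow_iff (hk : k ≠ 0) (hp : p.Prime) : KFree k (p ^ e) ↔ e < k := by
  refine ⟨fun h => ?_, fun hlt q hq hdvd => ?_⟩
  · by_contra! hle
    exact h p hp (pow_dvd_pow p hle)
  · obtain rfl := (Nat.prime_dvd_prime_iff_eq hq hp).1
      (hq.dvd_of_dvd_pow ((dvd_pow_self q hk).trans hdvd))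
    exact hlt.not_ge ((Nat.pow_dvd_pow_iff_le_right hq.one_lt).1 hdvd)

/-- The weight `1 / (n_{(k-1)-free} · φ(n_{(k-1)-power}))` of a `k`-free `n`, extended by zero to
the other integers, which makes it multiplicative on coprime arguments. -/
noncomputable def kFreeWeight (k : ℕ) : ℕ → ℝ :=
  {n | KFree k n}.indicator fun n =>
    (1 : ℝ) / ((freePart (k - 1) n * Nat.totient (powerPart (k - 1) n) : ℕ) : ℝ)

lemma kFreeWeight_of_kFree (h : KFree k n) :
    kFreeWeight k n =
      (1 : ℝ) / ((freePart (k - 1) n * Nat.totient (powerPart (k - 1) n) : ℕ) : ℝ) :=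
  Set.indicator_of_mem h _

lemma kFreeWeight_of_not_kFree (h : ¬KFree k n) : kFreeWeight k n = 0 :=
  Set.indicator_of_notMem h _

lemma kFreeWeight_one (hk : k ≠ 0) : kFreeWeight k 1 = 1 := by
  simp [kFreeWeight_of_kFree (kFree_one hk), freePart_one, powerPart_one]

lemma kFreeWeight_mul_of_coprime (hk : k ≠ 0) (h : a.Coprime b) :
    kFreeWeight k (a * b) = kFreeWeight k a * kFreeWeight k b := by
  by_cases hab : KFree k (a * b)
  · obtain ⟨ha, hb⟩ := (kFree_mul_iff_of_coprime hk h).1 hab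
    have hpow : (powerPart (k - 1) a).Coprime (powerPart (k - 1) b) :=
      h.of_dvd (powerPart_dvd _ ha.ne_zero) (powerPart_dvd _ hb.ne_zero)
    rw [kFreeWeight_of_kFree hab, kFreeWeight_of_kFree ha, kFreeWeight_of_kFree hb,
      freePart_mul_of_coprime h, powerPart_mul_of_coprime h, Nat.totient_mul hpow]
    push_cast
    ring
  · rw [kFreeWeight_of_not_kFree hab, eq_comm, mul_eq_zero]
    rw [kFree_mul_iff_of_coprime hk h, not_and_or] at hab
    exact hab.imp kFreeWeight_of_not_kFree kFreeWeight_of_not_kFree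

lemma kFreeWeight_prime_pow_of_le (hk : k ≠ 0) (hp : p.Prime) (he : k ≤ e) :
    kFreeWeight k (p ^ e) = 0 :=
  kFreeWeight_of_not_kFree ((kFree_prime_pow_iff hk hp).not.2 he.not_gt)

lemma kFreeWeight_prime_pow_of_lt (hp : p.Prime) (he : e < m) :
    kFreeWeight (m + 1) (p ^ e) = (1 / (p : ℝ)) ^ e := by
  have hfree : KFree (m + 1) (p ^ e) := (kFree_prime_pow_iff (by omega) hp).2 (by omega)
  rw [kFreeWeight_of_kFree hfree, Nat.add_sub_cancel, freePart_prime_pow _ _ hp,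
    powerPart_prime_pow _ _ hp, Nat.mod_eq_of_lt he, Nat.div_eq_of_lt he]
  simp

lemma kFreeWeight_prime_pow_self (hm : 0 < m) (hp : p.Prime) :
    kFreeWeight (m + 1) (p ^ m) = (1 / (p : ℝ)) ^ m * (1 - 1 / (p : ℝ))⁻¹ := by
  have hp0 : (p : ℝ) ≠ 0 := by exact_mod_cast hp.ne_zero
  have hfree : KFree (m + 1) (p ^ m) := (kFree_prime_pow_iff (by omega) hp).2 (by omega)
  have hfactor : 1 - 1 / (p : ℝ) = (p - 1) / p := by field_simp
  rw [kFreeWeight_of_kFree hfree, Nat.add_sub_cancel, freePart_prime_pow _ _ hp,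
    powerPart_prime_pow _ _ hp, Nat.mod_self, Nat.div_self hm, mul_one, pow_zero, one_mul,
    Nat.totient_prime_pow hp hm]
  obtain ⟨j, rfl⟩ := Nat.exists_eq_add_one.2 hm
  rw [hfactor, Nat.add_sub_cancel, Nat.cast_mul, Nat.cast_pow, Nat.cast_pred hp.pos, inv_div,
    one_div_pow]
  field_simp
  ring

lemma tsum_kFreeWeight_prime_pow (hk : 2 ≤ k) (hp : p.Prime) :
    ∑' e : ℕ, kFreeWeight k (p ^ e) = (1 - 1 / (p : ℝ))⁻¹ := by
  obtain ⟨m, rfl⟩ : ∃ m, k = m + 1 := ⟨k - 1, by omega⟩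
  have hx : 1 / (p : ℝ) < 1 := by
    simpa using inv_lt_one_of_one_lt₀ (by exact_mod_cast hp.one_lt : (1 : ℝ) < p)
  calc ∑' e : ℕ, kFreeWeight (m + 1) (p ^ e)
      = ∑ e ∈ Finset.range (m + 1), kFreeWeight (m + 1) (p ^ e) :=
        tsum_eq_sum fun e he =>
          kFreeWeight_prime_pow_of_le m.succ_ne_zero hp (by simpa using he)
    _ = ∑ e ∈ Finset.range m, (1 / (p : ℝ)) ^ e + (1 / (p : ℝ)) ^ m * (1 - 1 / (p : ℝ))⁻¹ := by
        rw [Finset.sum_range_succ, kFreeWeight_prime_pow_self (by omega) hp,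
          Finset.sum_congr rfl fun e he =>
            kFreeWeight_prime_pow_of_lt hp (Finset.mem_range.1 he)]
    _ = (1 - 1 / (p : ℝ))⁻¹ := by
        have hx' : 1 - 1 / (p : ℝ) ≠ 0 := (sub_pos.2 hx).ne'
        refine eq_inv_of_mul_eq_one_left ?_
        rw [add_mul, inv_mul_cancel_right₀ hx', geom_sum_mul_neg, sub_add_cancel]

lemma tsum_kFree_eq_tsum_smoothNumbers (k N : ℕ) :
    ∑' n : {n : ℕ // 0 < n ∧ (∀ p : ℕ, p.Prime → p ∣ n → p ≤ N) ∧ KFree k n},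
      (1 : ℝ) / ((freePart (k - 1) (n : ℕ) * Nat.totient (powerPart (k - 1) (n : ℕ)) : ℕ) : ℝ) =
    ∑' n : (N + 1).smoothNumbers, kFreeWeight k n := by
  have hset : {n : ℕ | 0 < n ∧ (∀ p : ℕ, p.Prime → p ∣ n → p ≤ N) ∧ KFree k n} =
      (N + 1).smoothNumbers ∩ {n | KFree k n} := by
    ext n
    simp only [Set.mem_ofPred_eq, Set.mem_inter_iff, Nat.mem_smoothNumbers', Nat.lt_succ_iff]
    exact ⟨And.right, fun h => ⟨Nat.pos_of_ne_zero h.2.ne_zero, h⟩⟩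
  let w : ℕ → ℝ := fun n =>
    (1 : ℝ) / ((freePart (k - 1) n * Nat.totient (powerPart (k - 1) n) : ℕ) : ℝ)
  calc _ = ∑' n : ((N + 1).smoothNumbers ∩ {n | KFree k n} : Set ℕ), w n :=
        tsum_congr_set_coe w hset
    _ = ∑' n : (N + 1).smoothNumbers, kFreeWeight k n := by
        rw [tsum_subtype, tsum_subtype, ← Set.indicator_indicator, kFreeWeight]

lemma tsum_kFree_eq_prod_primesLE (hk : 2 ≤ k) (N : ℕ) :
    ∑' n : {n : ℕ // 0 < n ∧ (∀ p : ℕ, p.Prime → p ∣ n → p ≤ N) ∧ KFree k n},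
      (1 : ℝ) / ((freePart (k - 1) (n : ℕ) * Nat.totient (powerPart (k - 1) (n : ℕ)) : ℕ) : ℝ) =
    ∏ p ∈ N.primesLE, (1 - 1 / (p : ℝ))⁻¹ := by
  have hk0 : k ≠ 0 := by omega
  have hsum {p : ℕ} (hp : p.Prime) : Summable fun e : ℕ => ‖kFreeWeight k (p ^ e)‖ :=
    summable_of_ne_finset_zero (s := Finset.range k) fun e he => by
      rw [kFreeWeight_prime_pow_of_le hk0 hp (by simpa using he), norm_zero]
  rw [tsum_kFree_eq_tsum_smoothNumbers,
    (EulerProduct.summable_and_hasSum_smoothNumbers_prod_primesBelow_tsum (kFreeWeight_one hk0)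
      (kFreeWeight_mul_of_coprime hk0) hsum (N + 1)).2.tsum_eq]
  exact Finset.prod_congr rfl fun p hp =>
    tsum_kFreeWeight_prime_pow hk (Nat.prime_of_mem_primesLE hp)

end KFreePart

section MertensFirst

open Real

variable {N p : ℕ}

lemma log_factorial_eq_sum_primesLE (N : ℕ) :
    log N.factorial = ∑ p ∈ N.primesLE, (N.factorial.factorization p : ℝ) * log p := by
  have hsupp : N.factorial.factorization.support ⊆ N.primesLE := fun p hp => by
    have hp' := Nat.prime_of_mem_primeFactors hp
    exact Nat.mem_primesLE.2
      ⟨hp'.dvd_factorial.1 (Nat.dvd_of_mem_primeFactors hp), hp'⟩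
  conv_lhs => rw [← Nat.prod_factorization_pow_eq_self N.factorial_ne_zero]
  rw [Finsupp.prod_of_support_subset _ hsupp _ (by simp), Nat.cast_prod, log_prod]
  · simp
  · intro p hp
    exact_mod_cast (pow_pos (Nat.prime_of_mem_primesLE hp).pos _).ne'

lemma div_sub_one_le_factorization_factorial (hp : p.Prime) (N : ℕ) :
    (N : ℝ) / p - 1 ≤ N.factorial.factorization p := by
  have hdiv : N / p ≤ N.factorial.factorization p := by
    rw [Nat.factorization_factorial hp (b := Nat.log p N + 2) (by omega)]
    have hone : 1 ∈ Finset.Ico 1 (Nat.log p N + 2) := Finset.mem_Ico.2 ⟨le_rfl, by omega⟩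
    simpa using Finset.single_le_sum (f := fun i => N / p ^ i) (fun _ _ => Nat.zero_le _) hone
  have hfloor := Nat.lt_floor_add_one ((N : ℝ) / p)
  rw [Nat.floor_div_eq_div] at hfloor
  have hcast : ((N / p : ℕ) : ℝ) ≤ N.factorial.factorization p := by exact_mod_cast hdiv
  linarith

lemma factorization_factorial_le_div_sub_one (hp : p.Prime) (N : ℕ) :
    (N.factorial.factorization p : ℝ) ≤ N / ((p : ℝ) - 1) := by
  rw [← Nat.cast_pred hp.pos]
  exact (Nat.cast_le.2 (Nat.factorization_factorial_le_div_pred hp N)).trans Nat.cast_div_le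

lemma sum_primesLE_log_div_le (hN : N ≠ 0) :
    ∑ p ∈ N.primesLE, log p / (p : ℝ) ≤ log N + log 4 := by
  have hN0 : (0 : ℝ) < N := by exact_mod_cast Nat.pos_of_ne_zero hN
  have hfact : log N.factorial ≤ N * log N := by
    rw [← log_pow]
    exact log_le_log (by exact_mod_cast N.factorial_pos) (by exact_mod_cast N.factorial_le_pow)
  have htheta : ∑ p ∈ N.primesLE, log p ≤ log 4 * N := by
    rw [← Chebyshev.theta_eq_sum_primesLE_log]
    exact Chebyshev.theta_le_log4_mul_x N.cast_nonneg
  refine le_of_mul_le_mul_left ?_ hN0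
  calc N * ∑ p ∈ N.primesLE, log p / (p : ℝ)
      = ∑ p ∈ N.primesLE, ((N : ℝ) / p - 1) * log p + ∑ p ∈ N.primesLE, log p := by
        rw [Finset.mul_sum, ← Finset.sum_add_distrib]
        exact Finset.sum_congr rfl fun p _ => by ring
    _ ≤ log N.factorial + ∑ p ∈ N.primesLE, log p := by
        rw [log_factorial_eq_sum_primesLE]
        gcongr with p hp
        exact div_sub_one_le_factorization_factorial (Nat.prime_of_mem_primesLE hp) N
    _ ≤ N * (log N + log 4) := by linarith

lemma log_sub_one_le_sum_primesLE_log_div_sub_one (hN : N ≠ 0) :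
    log N - 1 ≤ ∑ p ∈ N.primesLE, log p / ((p : ℝ) - 1) := by
  have hN0 : (0 : ℝ) < N := by exact_mod_cast Nat.pos_of_ne_zero hN
  have hstirling : N * (log N - 1) ≤ log N.factorial := by
    have hlogN : 0 ≤ log N := log_natCast_nonneg N
    have hpi : 0 ≤ log (2 * π) := log_nonneg (by linarith [pi_gt_three])
    linarith [Stirling.le_log_factorial_stirling hN]
  refine le_of_mul_le_mul_left (hstirling.trans ?_) hN0
  rw [log_factorial_eq_sum_primesLE, Finset.mul_sum]
  refine Finset.sum_le_sum fun p hp => ?_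
  calc (N.factorial.factorization p : ℝ) * log p
      ≤ N / ((p : ℝ) - 1) * log p := by
        gcongr
        exact factorization_factorial_le_div_sub_one (Nat.prime_of_mem_primesLE hp) N
    _ = N * (log p / ((p : ℝ) - 1)) := by ring

lemma log_div_sub_one_sub_log_div_le {x : ℝ} (hx : 2 ≤ x) :
    log x / (x - 1) - log x / x ≤ 4 * x ^ (-(3 / 2) : ℝ) := by
  have hx0 : 0 < x := by linarith
  have hx1 : 0 < x - 1 := by linarith
  have hlog : log x ≤ 2 * x ^ (1 / 2 : ℝ) := by
    linarith [log_le_rpow_div hx0.le (ε := 1 / 2) (by norm_num)]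
  have hpow : x ^ (-(3 / 2) : ℝ) = x ^ (1 / 2 : ℝ) / x ^ 2 := by
    rw [← rpow_natCast, ← rpow_sub hx0]
    norm_num
  calc log x / (x - 1) - log x / x = log x / (x * (x - 1)) := by field_simp; ring
    _ ≤ 2 * x ^ (1 / 2 : ℝ) / (x * (x / 2)) := by gcongr; linarith
    _ = 4 * x ^ (-(3 / 2) : ℝ) := by rw [hpow]; field_simp; norm_num

theorem exists_abs_sum_primesLE_log_div_sub_log_le :
    ∃ K : ℝ, ∀ N : ℕ, |∑ p ∈ N.primesLE, log p / (p : ℝ) - log N| ≤ K := by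
  have hsummable : Summable fun n : ℕ => 4 * (n : ℝ) ^ (-(3 / 2) : ℝ) :=
    (summable_nat_rpow.2 (by norm_num)).mul_left 4
  set T := ∑' n : ℕ, 4 * (n : ℝ) ^ (-(3 / 2) : ℝ)
  have hT : 0 ≤ T := tsum_nonneg fun n => by positivity
  have hlog4 : 0 ≤ log 4 := log_nonneg (by norm_num)
  refine ⟨log 4 + 1 + T, fun N => ?_⟩
  rcases eq_or_ne N 0 with rfl | hN
  · simpa using by linarith
  have hdiff : ∑ p ∈ N.primesLE, log p / ((p : ℝ) - 1) - ∑ p ∈ N.primesLE, log p / (p : ℝ) ≤ T := by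
    rw [← Finset.sum_sub_distrib]
    refine (Finset.sum_le_sum fun p hp => ?_).trans
      (hsummable.sum_le_tsum N.primesLE fun n _ => by positivity)
    exact log_div_sub_one_sub_log_div_le (by exact_mod_cast Nat.two_le_of_mem_primesLE hp)
  have hlower := log_sub_one_le_sum_primesLE_log_div_sub_one hN
  have hupper := sum_primesLE_log_div_le hN
  exact abs_le.2 ⟨by linarith, by linarith⟩

end MertensFirst

section MertensSecond

open Real Topology

lemma exists_tendsto_sum_range_succ_sub {F g : ℕ → ℝ} (hg : ∀ n, 0 ≤ g n)
    (hle : ∀ n, F (n + 1) - F n ≤ g n) (hge : ∀ n, g (n + 1) ≤ F (n + 1) - F n) :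
    ∃ C : ℝ, Tendsto (fun n => ∑ i ∈ Finset.range (n + 1), g i - F n) atTop (𝓝 C) := by
  have hanti : Antitone fun n => ∑ i ∈ Finset.range (n + 1), g i - F n :=
    antitone_nat_of_succ_le fun n => by
      rw [Finset.sum_range_succ]
      linarith [hge n]
  have hbdd (n : ℕ) : -F 0 ≤ ∑ i ∈ Finset.range (n + 1), g i - F n := by
    have htele := Finset.sum_le_sum fun i (_ : i ∈ Finset.range n) => hle i
    rw [Finset.sum_range_sub] at htele
    rw [Finset.sum_range_succ]
    linarith [hg n]
  exact ⟨_, tendsto_atTop_ciInf hanti ⟨-F 0, Set.forall_mem_range.2 hbdd⟩⟩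

lemma log_sub_log_le {a b : ℝ} (ha : 0 < a) (hb : 0 < b) : log b - log a ≤ (b - a) / a := by
  rw [← log_div hb.ne' ha.ne', sub_div, div_self ha.ne']
  exact log_le_sub_one_of_pos (div_pos hb ha)

lemma log_log_sub_log_log_le {x y : ℝ} (hx : 1 < x) (hy : 1 < y) :
    log (log y) - log (log x) ≤ (y - x) / (x * log x) :=
  calc log (log y) - log (log x) ≤ (log y - log x) / log x :=
        log_sub_log_le (log_pos hx) (log_pos hy)
    _ ≤ (y - x) / x / log x := by
        gcongr
        · exact (log_pos hx).le
        · exact log_sub_log_le (by linarith) (by linarith)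
    _ = (y - x) / (x * log x) := div_div _ _ _

-- The terms with `n = 0` and `n = 1` are `0⁻¹ = 0`.
theorem exists_tendsto_sum_inv_mul_log_sub_log_log :
    ∃ C : ℝ, Tendsto (fun N : ℕ => ∑ n ∈ Finset.range (N + 1), ((n : ℝ) * log n)⁻¹ - log (log N))
      atTop (𝓝 C) := by
  have hcast (n : ℕ) : (1 : ℝ) < n + 2 := by linarith [n.cast_nonneg (α := ℝ)]
  obtain ⟨C, hC⟩ := exists_tendsto_sum_range_succ_sub
    (F := fun n : ℕ => log (log (n + 2))) (g := fun n : ℕ => (((n : ℝ) + 2) * log (n + 2))⁻¹)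
    (fun n => inv_nonneg.2 (mul_nonneg (by linarith [hcast n]) (log_pos (hcast n)).le))
    (fun n => by
      simpa [add_right_comm] using log_log_sub_log_log_le (hcast n) (hcast (n + 1)))
    (fun n => by
      have h := log_log_sub_log_log_le (hcast (n + 1)) (hcast n)
      push_cast at h ⊢
      rw [show (n + 2 - (n + 1 + 2) : ℝ) = -1 by ring, neg_div, one_div] at h
      linarith)
  refine ⟨C, (tendsto_add_atTop_iff_nat 2).1 (hC.congr fun N => ?_)⟩
  rw [Finset.sum_range_succ' _ (N + 2), Finset.sum_range_succ' _ (N + 1)]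
  simp [add_assoc, one_add_one_eq_two]

-- Dirichlet's test; the terms with `n = 0` and `n = 1` vanish because `log 0 = log 1 = 0`.
lemma exists_tendsto_sum_range_div_log {c : ℕ → ℝ} {K : ℝ}
    (hc : ∀ N, |∑ n ∈ Finset.range N, c n| ≤ K) :
    ∃ L : ℝ, Tendsto (fun N => ∑ n ∈ Finset.range N, c n / log n) atTop (𝓝 L) := by
  have hanti : Antitone fun n : ℕ => (log (n + 2))⁻¹ := fun m n hmn =>
    inv_anti₀ (log_pos (by linarith [m.cast_nonneg (α := ℝ)])) (by gcongr)
  have hzero : Tendsto (fun n : ℕ => (log (n + 2))⁻¹) atTop (𝓝 0) :=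
    (tendsto_log_atTop.comp
      (tendsto_atTop_add_const_right _ 2 tendsto_natCast_atTop_atTop)).inv_tendsto_atTop
  have hshift (b : ℕ → ℝ) (N : ℕ) : ∑ n ∈ Finset.range (N + 2), b n =
      ∑ n ∈ Finset.range 2, b n + ∑ n ∈ Finset.range N, b (n + 2) := by
    rw [add_comm N, Finset.sum_range_add]
    simp only [add_comm]
  have hbdd (N : ℕ) : ‖∑ n ∈ Finset.range N, c (n + 2)‖ ≤ K + K := by
    rw [norm_eq_abs, ← add_sub_cancel_left (∑ n ∈ Finset.range 2, c n)
      (∑ n ∈ Finset.range N, c (n + 2)), ← hshift]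
    exact (abs_sub _ _).trans (add_le_add (hc _) (hc _))
  obtain ⟨L, hL⟩ := cauchySeq_tendsto_of_complete
    (hanti.cauchySeq_series_mul_of_tendsto_zero_of_bounded hzero hbdd)
  refine ⟨L, (tendsto_add_atTop_iff_nat 2).1 (hL.congr fun N => ?_)⟩
  rw [hshift]
  simp [Finset.sum_range_succ, div_eq_inv_mul]

lemma abs_harmonic_sub_log_le_one (N : ℕ) : |(harmonic N : ℝ) - log N| ≤ 1 := by
  rcases eq_or_ne N 0 with rfl | hN
  · simp
  have hlog : log N ≤ log ↑(N + 1) := by gcongr; simp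
  exact abs_le.2
    ⟨by linarith [log_add_one_le_harmonic N], by linarith [harmonic_le_one_add_log N]⟩

lemma sum_range_succ_ite_prime (f : ℕ → ℝ) (N : ℕ) :
    ∑ n ∈ Finset.range (N + 1), (if n.Prime then f n else 0) = ∑ p ∈ N.primesLE, f p := by
  rw [Nat.primesLE_eq_filter_range, Finset.sum_filter]

lemma sum_range_succ_inv (N : ℕ) :
    ∑ n ∈ Finset.range (N + 1), (n : ℝ)⁻¹ = harmonic N := by
  rw [Finset.sum_range_succ', harmonic]
  simp

lemma exists_tendsto_sum_primesLE_inv_sub_sum_inv_mul_log :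
    ∃ L : ℝ, Tendsto (fun N : ℕ => ∑ p ∈ N.primesLE, (p : ℝ)⁻¹ -
      ∑ n ∈ Finset.range (N + 1), ((n : ℝ) * log n)⁻¹) atTop (𝓝 L) := by
  obtain ⟨K, hK⟩ := exists_abs_sum_primesLE_log_div_sub_log_le
  have hc (N : ℕ) : |∑ n ∈ Finset.range N,
      ((if n.Prime then log n / (n : ℝ) else 0) - (n : ℝ)⁻¹)| ≤ K + 1 := by
    rcases N with - | N
    · simpa using (abs_nonneg _).trans (hK 0) |>.trans (by linarith)
    rw [Finset.sum_sub_distrib, sum_range_succ_ite_prime (fun n => log n / n),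
      sum_range_succ_inv, ← sub_sub_sub_cancel_right _ _ (log N)]
    exact (abs_sub _ _).trans (add_le_add (hK N) (abs_harmonic_sub_log_le_one N))
  obtain ⟨L, hL⟩ := exists_tendsto_sum_range_div_log hc
  refine ⟨L, (hL.comp (tendsto_add_atTop_nat 1)).congr fun N => ?_⟩
  rw [Function.comp_apply, ← sum_range_succ_ite_prime (fun n => (n : ℝ)⁻¹),
    ← Finset.sum_sub_distrib]
  refine Finset.sum_congr rfl fun n _ => ?_
  rw [sub_div, ite_div, zero_div, mul_inv, div_eq_mul_inv (n : ℝ)⁻¹]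
  by_cases hn : n.Prime
  · have hlog : log n ≠ 0 := (log_pos (by exact_mod_cast hn.one_lt)).ne'
    rw [if_pos hn, if_pos hn, div_right_comm, div_self hlog, one_div]
  · rw [if_neg hn, if_neg hn]

theorem exists_tendsto_sum_primesLE_inv_sub_log_log :
    ∃ M : ℝ, Tendsto (fun N : ℕ => ∑ p ∈ N.primesLE, (p : ℝ)⁻¹ - log (log N)) atTop (𝓝 M) := by
  obtain ⟨L, hL⟩ := exists_tendsto_sum_primesLE_inv_sub_sum_inv_mul_log
  obtain ⟨C, hC⟩ := exists_tendsto_sum_inv_mul_log_sub_log_log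
  exact ⟨L + C, (hL.add hC).congr fun N => sub_add_sub_cancel _ _ _⟩

end MertensSecond

section AbelMean

open MeasureTheory Topology

variable {ι : Type*} {a l : ι → ℝ} {L : ℝ}

/-- The summatory function `u ↦ ∑_{l i ≤ u} a i` of the general Dirichlet series
`∑ a i * exp (-(δ * l i))` with coefficients `a` and frequencies `l`. -/
noncomputable def summatory (a l : ι → ℝ) (u : ℝ) : ℝ := ∑' i, {i | l i ≤ u}.indicator a i

lemma summable_indicator_of_summable_mul_exp_neg {δ : ℝ} (hδ : 0 ≤ δ)
    (hs : Summable fun i => a i * Real.exp (-(δ * l i))) (u : ℝ) :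
    Summable ({i | l i ≤ u}.indicator a) := by
  refine (hs.norm.mul_left (Real.exp (δ * u))).of_norm_bounded fun i => ?_
  rw [norm_indicator_eq_indicator_norm]
  refine Set.indicator_apply_le' (fun hi => ?_) fun _ => by positivity
  rw [norm_mul, Real.norm_of_nonneg (Real.exp_pos _).le, mul_left_comm, ← Real.exp_add]
  refine le_mul_of_one_le_right (norm_nonneg _) (Real.one_le_exp ?_)
  rw [← sub_eq_add_neg, ← mul_sub]
  exact mul_nonneg hδ (sub_nonneg.2 hi)

lemma abs_summatory_le_of_le (hs : ∀ u, Summable ({i | l i ≤ u}.indicator a)) {u U : ℝ}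
    (hu : u ≤ U) : |summatory a l u| ≤ ∑' i, ‖{i | l i ≤ U}.indicator a i‖ := by
  refine (norm_tsum_le_tsum_norm (hs u).norm).trans ((hs u).norm.tsum_le_tsum (fun i => ?_)
    (hs U).norm)
  exact norm_indicator_le_of_subset (fun i (hi : l i ≤ u) => hi.trans hu) a i

lemma exists_abs_summatory_le (hs : ∀ u, Summable ({i | l i ≤ u}.indicator a))
    (hL : Tendsto (summatory a l) atTop (𝓝 L)) : ∃ B, ∀ u, |summatory a l u| ≤ B := by
  obtain ⟨U, hU⟩ := eventually_atTop.1 (hL.abs.eventually_le_const (lt_add_one |L|))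
  refine ⟨max (|L| + 1) (∑' i, ‖{i | l i ≤ U}.indicator a i‖), fun u => ?_⟩
  rcases le_total U u with h | h
  · exact (hU u h).trans (le_max_left _ _)
  · exact (abs_summatory_le_of_le hs h).trans (le_max_right _ _)

lemma measurable_summatory [Countable ι] (a l : ι → ℝ) : Measurable (summatory a l) :=
  Measurable.tsum fun i => measurable_const.indicator (measurableSet_Ici (a := l i))

lemma integral_Ici_indicator_exp_neg {c : ℝ} (hc : 0 ≤ c) :
    ∫ v in Set.Ici 0, (Set.Ici c).indicator (fun v => Real.exp (-v)) v = Real.exp (-c) := by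
  rw [setIntegral_indicator measurableSet_Ici, Set.Ici_inter_Ici, max_eq_right hc,
    integral_Ici_eq_integral_Ioi, integral_exp_neg_Ioi]

lemma tsum_mul_exp_neg_eq_integral_summatory [Countable ι] (hl : ∀ i, 0 ≤ l i) {δ : ℝ} (hδ : 0 < δ)
    (hs : Summable fun i => a i * Real.exp (-(δ * l i))) :
    ∑' i, a i * Real.exp (-(δ * l i)) =
      ∫ v in Set.Ici 0, summatory a l (v / δ) * Real.exp (-v) := by
  let E (i : ι) : ℝ → ℝ := (Set.Ici (δ * l i)).indicator fun v => Real.exp (-v)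
  have hE0 (i : ι) (v : ℝ) : 0 ≤ E i v := Set.indicator_nonneg (fun v _ => (Real.exp_pos _).le) v
  have hEint (i : ι) : ∫ v in Set.Ici 0, E i v = Real.exp (-(δ * l i)) :=
    integral_Ici_indicator_exp_neg (mul_nonneg hδ.le (hl i))
  have hexp : IntegrableOn (fun v => Real.exp (-v)) (Set.Ici 0) := by
    rw [integrableOn_Ici_iff_integrableOn_Ioi]
    exact integrableOn_exp_neg_Ioi 0
  have hint (i : ι) : IntegrableOn (fun v => a i * E i v) (Set.Ici 0) :=
    (hexp.indicator measurableSet_Ici).const_mul (a i)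
  have hnorm : Summable fun i => ∫ v in Set.Ici 0, ‖a i * E i v‖ := by
    simpa only [norm_mul, Real.norm_of_nonneg (hE0 _ _), integral_const_mul, hEint,
      Real.norm_of_nonneg (Real.exp_pos _).le] using hs.norm
  calc ∑' i, a i * Real.exp (-(δ * l i)) = ∑' i, ∫ v in Set.Ici 0, a i * E i v := by
        simp only [integral_const_mul, hEint]
    _ = ∫ v in Set.Ici 0, ∑' i, a i * E i v := integral_tsum_of_summable_integral_norm hint hnorm
    _ = ∫ v in Set.Ici 0, summatory a l (v / δ) * Real.exp (-v) := by
        refine integral_congr_ae (Eventually.of_forall fun v => ?_)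
        simp only [summatory, ← tsum_mul_right]
        refine tsum_congr fun i => ?_
        simp only [E, Set.indicator_apply, Set.mem_Ici, Set.mem_ofPred_eq, le_div_iff₀' hδ]
        split_ifs <;> simp

theorem tendsto_tsum_mul_exp_neg_of_tendsto_summatory [Countable ι] (hl : ∀ i, 0 ≤ l i)
    (hs : ∀ δ > 0, Summable fun i => a i * Real.exp (-(δ * l i)))
    (hL : Tendsto (summatory a l) atTop (𝓝 L)) :
    Tendsto (fun δ => ∑' i, a i * Real.exp (-(δ * l i))) (𝓝[>] 0) (𝓝 L) := by
  obtain ⟨B, hB⟩ := exists_abs_summatory_le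
    (summable_indicator_of_summable_mul_exp_neg zero_le_one (hs 1 one_pos)) hL
  have hlim : Tendsto (fun δ => ∫ v in Set.Ioi 0, summatory a l (v / δ) * Real.exp (-v)) (𝓝[>] 0)
      (𝓝 (∫ v in Set.Ioi 0, L * Real.exp (-v))) := by
    refine tendsto_integral_filter_of_dominated_convergence (fun v => B * Real.exp (-v))
      (Eventually.of_forall fun δ => ?_) (Eventually.of_forall fun δ => ?_)
      ((integrableOn_exp_neg_Ioi 0).const_mul B) ?_
    · have hmeas := measurable_summatory a l
      exact Measurable.aestronglyMeasurable (by fun_prop)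
    · refine Eventually.of_forall fun v => ?_
      rw [norm_mul, Real.norm_of_nonneg (Real.exp_pos _).le]
      exact mul_le_mul_of_nonneg_right (hB _) (Real.exp_pos _).le
    · refine ae_restrict_of_forall_mem measurableSet_Ioi fun v hv => ?_
      have hdiv : Tendsto (fun δ => v / δ) (𝓝[>] 0) atTop :=
        tendsto_inv_nhdsGT_zero.const_mul_atTop hv
      exact (hL.comp hdiv).mul_const _
  rw [integral_const_mul, integral_exp_neg_Ioi_zero, mul_one] at hlim
  refine hlim.congr' ?_
  filter_upwards [self_mem_nhdsWithin] with δ hδ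
  rw [tsum_mul_exp_neg_eq_integral_summatory hl hδ (hs δ hδ), integral_Ici_eq_integral_Ioi]

end AbelMean

section AbelComparison

open Topology

variable {ι κ : Type*} {a l : ι → ℝ} {b m : κ → ℝ}

lemma summatory_neg (a l : ι → ℝ) (u : ℝ) : summatory (-a) l u = -summatory a l u := by
  simp only [summatory, Set.indicator_neg', Pi.neg_apply, tsum_neg]

lemma summatory_sumElim {u : ℝ} (ha : Summable ({i | l i ≤ u}.indicator a))
    (hb : Summable ({j | m j ≤ u}.indicator b)) :
    summatory (Sum.elim a b) (Sum.elim l m) u = summatory a l u + summatory b m u :=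
  Summable.tsum_sum ha hb

theorem tendsto_tsum_sub_tsum_of_tendsto_summatory_sub [Countable ι] [Countable κ]
    (hl : ∀ i, 0 ≤ l i) (hm : ∀ j, 0 ≤ m j)
    (ha : ∀ δ > 0, Summable fun i => a i * Real.exp (-(δ * l i)))
    (hb : ∀ δ > 0, Summable fun j => b j * Real.exp (-(δ * m j))) {L : ℝ}
    (hL : Tendsto (fun u => summatory a l u - summatory b m u) atTop (𝓝 L)) :
    Tendsto (fun δ => ∑' i, a i * Real.exp (-(δ * l i)) - ∑' j, b j * Real.exp (-(δ * m j)))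
      (𝓝[>] 0) (𝓝 L) := by
  have hb' (δ : ℝ) (hδ : δ > 0) : Summable fun j => (-b) j * Real.exp (-(δ * m j)) := by
    simpa only [Pi.neg_apply, neg_mul] using (hb δ hδ).neg
  have hsummatory (u : ℝ) : summatory (Sum.elim a (-b)) (Sum.elim l m) u =
      summatory a l u - summatory b m u := by
    rw [summatory_sumElim (summable_indicator_of_summable_mul_exp_neg zero_le_one (ha 1 one_pos) u)
      (summable_indicator_of_summable_mul_exp_neg zero_le_one (hb' 1 one_pos) u), summatory_neg,
      sub_eq_add_neg]
  let c (δ : ℝ) (i : ι ⊕ κ) : ℝ := Sum.elim a (-b) i * Real.exp (-(δ * Sum.elim l m i))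
  have hsplit (δ : ℝ) (hδ : δ > 0) : ∑' i, c δ i =
      ∑' i, a i * Real.exp (-(δ * l i)) - ∑' j, b j * Real.exp (-(δ * m j)) := by
    rw [Summable.tsum_sum (f := c δ) (ha δ hδ) (hb' δ hδ), sub_eq_add_neg, ← tsum_neg]
    simp only [c, Sum.elim_inl, Sum.elim_inr, Pi.neg_apply, neg_mul]
  refine (tendsto_tsum_mul_exp_neg_of_tendsto_summatory (Sum.forall.2 ⟨hl, hm⟩)
    (fun δ hδ => Summable.sum (c δ) (ha δ hδ) (hb' δ hδ))
    (hL.congr fun u => (hsummatory u).symm)).congr' ?_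
  filter_upwards [self_mem_nhdsWithin] with δ hδ using hsplit δ hδ

end AbelComparison

section PrimeZeta

open Real Topology

/-- The terms of order at least two in the power series of `-log (1 - x)`; summed over `x = 1 / p`
they measure the difference between the sums of `-log (1 - 1 / p)` and of `1 / p`. -/
noncomputable def negLogTail (x : ℝ) : ℝ := -log (1 - x) - x

lemma abs_negLogTail_le {x : ℝ} (hx : x ≤ 1 / 2) : |negLogTail x| ≤ 2 * x ^ 2 := by
  have hpos : 0 < 1 - x := by linarith
  have hupper : (1 - x)⁻¹ ≤ 1 + x + 2 * x ^ 2 := by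
    rw [inv_le_iff_one_le_mul₀ hpos]
    nlinarith [mul_nonneg (sq_nonneg x) (by linarith : (0 : ℝ) ≤ 1 - 2 * x)]
  have hlog_le := log_le_sub_one_of_pos hpos
  have hle_log := one_sub_inv_le_log_of_pos hpos
  rw [negLogTail]
  exact abs_le.2 ⟨by linarith [sq_nonneg x], by linarith⟩

lemma prime_rpow_neg_le_half {s : ℝ} (hs : 1 ≤ s) (p : Nat.Primes) : (p : ℝ) ^ (-s) ≤ 1 / 2 := by
  have hp : (2 : ℝ) ≤ p := by exact_mod_cast p.2.two_le
  calc (p : ℝ) ^ (-s) ≤ (p : ℝ) ^ (-1 : ℝ) :=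
        rpow_le_rpow_of_exponent_le (by linarith) (by linarith)
    _ ≤ 1 / 2 := by
        rw [rpow_neg_one, one_div]
        exact inv_anti₀ two_pos hp

lemma abs_negLogTail_prime_rpow_le {s : ℝ} (hs : 1 ≤ s) (p : Nat.Primes) :
    |negLogTail ((p : ℝ) ^ (-s))| ≤ 2 * (p : ℝ) ^ (-2 : ℝ) := by
  have hp : (1 : ℝ) ≤ p := by exact_mod_cast p.2.one_le
  refine (abs_negLogTail_le (prime_rpow_neg_le_half hs p)).trans ?_
  rw [← rpow_mul_natCast (by positivity)]
  gcongr 2 * ?_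
  exact rpow_le_rpow_of_exponent_le hp (by push_cast; linarith)

lemma summable_negLogTail_prime_rpow {s : ℝ} (hs : 1 ≤ s) :
    Summable fun p : Nat.Primes => negLogTail ((p : ℝ) ^ (-s)) :=
  ((Nat.Primes.summable_rpow.2 (by norm_num)).mul_left 2).of_norm_bounded
    (abs_negLogTail_prime_rpow_le hs)

lemma tendsto_tsum_negLogTail_prime_rpow :
    Tendsto (fun s : ℝ => ∑' p : Nat.Primes, negLogTail ((p : ℝ) ^ (-s))) (𝓝[>] 1)
      (𝓝 (∑' p : Nat.Primes, negLogTail (p : ℝ)⁻¹)) := by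
  have hbound : Summable fun p : Nat.Primes => 2 * (p : ℝ) ^ (-2 : ℝ) :=
    (Nat.Primes.summable_rpow.2 (by norm_num)).mul_left 2
  refine tendsto_tsum_of_dominated_convergence hbound (fun p => ?_) ?_
  · have hp : (p : ℝ) ≠ 0 := by exact_mod_cast p.2.ne_zero
    have hne : 1 - (p : ℝ) ^ (-1 : ℝ) ≠ 0 := by linarith [prime_rpow_neg_le_half le_rfl p]
    have hcont : ContinuousAt (fun s : ℝ => negLogTail ((p : ℝ) ^ (-s))) 1 := by
      unfold negLogTail
      fun_prop (disch := assumption)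
    simpa only [rpow_neg_one] using hcont.tendsto.mono_left nhdsWithin_le_nhds
  · filter_upwards [self_mem_nhdsWithin] with s hs p
    exact abs_negLogTail_prime_rpow_le (le_of_lt hs) p

lemma tsum_neg_log_one_sub_prime_rpow {s : ℝ} (hs : 1 < s) :
    ∑' p : Nat.Primes, -log (1 - (p : ℝ) ^ (-s)) = log (riemannZeta s).re := by
  have hcast (p : Nat.Primes) : -Complex.log (1 - (p : ℂ) ^ (-(s : ℂ))) =
      ((-log (1 - (p : ℝ) ^ (-s)) : ℝ) : ℂ) := by
    have hp := prime_rpow_neg_le_half hs.le p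
    rw [Complex.ofReal_neg, Complex.ofReal_log (by linarith), Complex.ofReal_sub,
      Complex.ofReal_cpow (Nat.cast_nonneg _)]
    simp
  have heuler := riemannZeta_eulerProduct_exp_log (s := s) (by simpa using hs)
  rw [tsum_congr hcast, ← Complex.ofReal_tsum, ← Complex.ofReal_exp] at heuler
  rw [← heuler, Complex.ofReal_re, log_exp]

theorem tendsto_tsum_prime_rpow_add_log :
    Tendsto (fun s : ℝ => ∑' p : Nat.Primes, (p : ℝ) ^ (-s) + log (s - 1)) (𝓝[>] 1)
      (𝓝 (-∑' p : Nat.Primes, negLogTail (p : ℝ)⁻¹)) := by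
  have hzeta := (Asymptotics.isLittleO_one_iff ℝ).1 log_riemannZeta_add_log_sub_isLittleO_ofReal
  have hlim := hzeta.sub tendsto_tsum_negLogTail_prime_rpow
  rw [zero_sub] at hlim
  refine hlim.congr' ?_
  filter_upwards [self_mem_nhdsWithin] with s (hs : 1 < s)
  have hsplit : ∑' p : Nat.Primes, -log (1 - (p : ℝ) ^ (-s)) =
      ∑' p : Nat.Primes, (p : ℝ) ^ (-s) + ∑' p : Nat.Primes, negLogTail ((p : ℝ) ^ (-s)) := by
    rw [← (Nat.Primes.summable_rpow.2 (by linarith)).tsum_add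
      (summable_negLogTail_prime_rpow hs.le)]
    simp only [negLogTail, add_sub_cancel]
  rw [← tsum_neg_log_one_sub_prime_rpow hs, hsplit]
  ring

lemma hasSum_inv_mul_exp_neg {δ : ℝ} (hδ : 0 < δ) :
    HasSum (fun n : ℕ => ((n : ℝ) + 1)⁻¹ * exp (-(δ * (n + 1)))) (-log (1 - exp (-δ))) := by
  have hx : |exp (-δ)| < 1 := by rwa [abs_exp, exp_lt_one_iff, neg_lt_zero]
  refine (hasSum_pow_div_log_of_abs_lt_one hx).congr_fun fun n => ?_
  rw [← exp_nat_mul, div_eq_inv_mul]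
  push_cast
  ring_nf

lemma tendsto_log_one_sub_exp_neg_sub_log :
    Tendsto (fun δ : ℝ => log (1 - exp (-δ)) - log δ) (𝓝[>] 0) (𝓝 0) := by
  have hderiv : HasDerivAt (fun δ : ℝ => 1 - exp (-δ)) 1 0 := by
    simpa using ((hasDerivAt_neg (0 : ℝ)).exp.const_sub 1)
  have hslope := hderiv.tendsto_slope_zero_right.log one_ne_zero
  rw [log_one] at hslope
  refine hslope.congr' ?_
  filter_upwards [self_mem_nhdsWithin] with δ (hδ : 0 < δ)
  have hpos : 0 < 1 - exp (-δ) := by rwa [sub_pos, exp_lt_one_iff, neg_lt_zero]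
  rw [← log_div hpos.ne' hδ.ne']
  simp [div_eq_inv_mul]

end PrimeZeta

section MertensConstant

open Real Asymptotics Topology

lemma tendsto_log_sub_log_of_isEquivalent {α : Type*} {F : Filter α} {f g : α → ℝ}
    (hfg : f ~[F] g) (hg : Tendsto g F atTop) :
    Tendsto (fun x => log (f x) - log (g x)) F (𝓝 0) := by
  have hg0 := hg.eventually_ne_atTop 0
  have hf0 := (hfg.symm.tendsto_atTop hg).eventually_ne_atTop 0
  have hlog := ((isEquivalent_iff_tendsto_one hg0).1 hfg).log one_ne_zero
  rw [log_one] at hlog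
  refine hlog.congr' ?_
  filter_upwards [hg0, hf0] with x hgx hfx
  rw [Pi.div_apply, log_div hfx hgx]

lemma tendsto_harmonic_floor_sub_log :
    Tendsto (fun u : ℝ => (harmonic ⌊u⌋₊ : ℝ) - log u) atTop (𝓝 eulerMascheroniConstant) := by
  have hfloor := tendsto_log_sub_log_of_isEquivalent (isEquivalent_nat_floor (R := ℝ)) tendsto_id
  have hlim := (tendsto_harmonic_sub_log.comp tendsto_nat_floor_atTop).add hfloor
  rw [add_zero] at hlim
  exact hlim.congr fun u => sub_add_sub_cancel _ _ _

lemma tendsto_sum_primesLE_floor_exp_sub_log {f : ℕ → ℝ} {M : ℝ}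
    (hf : Tendsto (fun N : ℕ => ∑ p ∈ N.primesLE, f p - log (log N)) atTop (𝓝 M)) :
    Tendsto (fun u : ℝ => ∑ p ∈ ⌊exp u⌋₊.primesLE, f p - log u) atTop (𝓝 M) := by
  have hfloor := (tendsto_log_sub_log_of_isEquivalent
    ((isEquivalent_nat_floor (R := ℝ)).log tendsto_id) tendsto_log_atTop).comp tendsto_exp_atTop
  have hlim := (hf.comp (tendsto_nat_floor_atTop.comp tendsto_exp_atTop)).add hfloor
  rw [add_zero] at hlim
  refine hlim.congr fun u => ?_
  simp only [Function.comp_apply, log_exp, sub_add_sub_cancel]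

lemma summatory_primes_log (f : ℕ → ℝ) (u : ℝ) :
    summatory (fun p : Nat.Primes => f p) (fun p => log p) u = ∑ p ∈ ⌊exp u⌋₊.primesLE, f p := by
  have hmem {p : ℕ} (hp : p.Prime) : log p ≤ u ↔ p ∈ ⌊exp u⌋₊.primesLE := by
    rw [log_le_iff_le_exp (by exact_mod_cast hp.pos), ← Nat.le_floor_iff (exp_pos u).le,
      Nat.mem_primesLE, and_iff_left hp]
  calc summatory (fun p : Nat.Primes => f p) (fun p => log p) u
      = ∑' p : Nat.Primes, (⌊exp u⌋₊.primesLE : Set ℕ).indicator f p :=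
        tsum_congr fun p => by
          simp only [Set.indicator_apply, Set.mem_ofPred_eq, hmem p.2, Finset.mem_coe]
    _ = ∑ p ∈ ⌊exp u⌋₊.primesLE, f p := by
        rw [sum_eq_tsum_indicator]
        refine tsum_subtype_eq_of_support_subset fun p hp => ?_
        exact Nat.prime_of_mem_primesLE (Set.mem_of_indicator_ne_zero hp)

lemma summatory_inv_add_one (u : ℝ) :
    summatory (fun n : ℕ => ((n : ℝ) + 1)⁻¹) (fun n => n + 1) u = harmonic ⌊u⌋₊ := by
  have hmem (n : ℕ) : (n : ℝ) + 1 ≤ u ↔ n ∈ Finset.range ⌊u⌋₊ := by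
    rw [Finset.mem_range, ← Nat.succ_le_iff, Nat.le_floor_iff' n.succ_ne_zero, Nat.cast_succ]
  have hset : {n : ℕ | (n : ℝ) + 1 ≤ u} = Finset.range ⌊u⌋₊ := Set.ext hmem
  rw [summatory, hset, ← sum_eq_tsum_indicator, harmonic]
  push_cast
  rfl

lemma prime_inv_mul_exp_neg_log (δ : ℝ) (p : Nat.Primes) :
    (p : ℝ)⁻¹ * exp (-(δ * log p)) = (p : ℝ) ^ (-(1 + δ)) := by
  have hp : (0 : ℝ) < p := by exact_mod_cast p.2.pos
  rw [neg_add, rpow_add hp, rpow_neg_one, rpow_def_of_pos hp, mul_neg, mul_comm δ]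

lemma tendsto_tsum_prime_sub_tsum_harmonic :
    Tendsto (fun δ : ℝ => ∑' p : Nat.Primes, (p : ℝ)⁻¹ * exp (-(δ * log p)) -
      ∑' n : ℕ, ((n : ℝ) + 1)⁻¹ * exp (-(δ * (n + 1)))) (𝓝[>] 0)
      (𝓝 (-∑' p : Nat.Primes, negLogTail (p : ℝ)⁻¹)) := by
  have hshift : Tendsto (fun δ : ℝ => 1 + δ) (𝓝[>] 0) (𝓝[>] 1) := by
    rw [Tendsto, map_add_left_nhdsGT, add_zero]
  have hlim := (tendsto_tsum_prime_rpow_add_log.comp hshift).add tendsto_log_one_sub_exp_neg_sub_log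
  rw [add_zero] at hlim
  refine hlim.congr' ?_
  filter_upwards [self_mem_nhdsWithin] with δ hδ
  rw [(hasSum_inv_mul_exp_neg hδ).tsum_eq, Function.comp_apply, add_sub_cancel_left]
  simp only [prime_inv_mul_exp_neg_log]
  ring

theorem tendsto_sum_primesLE_inv_sub_log_log :
    Tendsto (fun N : ℕ => ∑ p ∈ N.primesLE, (p : ℝ)⁻¹ - log (log N)) atTop
      (𝓝 (eulerMascheroniConstant - ∑' p : Nat.Primes, negLogTail (p : ℝ)⁻¹)) := by
  obtain ⟨M, hM⟩ := exists_tendsto_sum_primesLE_inv_sub_log_log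
  have hsummatory : Tendsto (fun u : ℝ =>
      summatory (fun p : Nat.Primes => (p : ℝ)⁻¹) (fun p => log p) u -
        summatory (fun n : ℕ => ((n : ℝ) + 1)⁻¹) (fun n => n + 1) u)
      atTop (𝓝 (M - eulerMascheroniConstant)) := by
    refine ((tendsto_sum_primesLE_floor_exp_sub_log hM).sub
      tendsto_harmonic_floor_sub_log).congr fun u => ?_
    rw [summatory_primes_log (fun n => (n : ℝ)⁻¹), summatory_inv_add_one, sub_sub_sub_cancel_right]
  have habel := tendsto_tsum_sub_tsum_of_tendsto_summatory_sub
    (fun p : Nat.Primes => log_natCast_nonneg p) (fun n : ℕ => by positivity)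
    (fun δ (hδ : 0 < δ) => by
      simpa only [prime_inv_mul_exp_neg_log] using Nat.Primes.summable_rpow.2 (by linarith))
    (fun δ hδ => (hasSum_inv_mul_exp_neg hδ).summable) hsummatory
  have hconst := tendsto_nhds_unique habel tendsto_tsum_prime_sub_tsum_harmonic
  convert hM using 2
  linarith

theorem tendsto_sum_primesLE_neg_log_sub_log_log :
    Tendsto (fun N : ℕ => ∑ p ∈ N.primesLE, -log (1 - 1 / (p : ℝ)) - log (log N)) atTop
      (𝓝 eulerMascheroniConstant) := by
  have htail : Tendsto (fun N : ℕ => ∑ p ∈ N.primesLE, negLogTail (p : ℝ)⁻¹) atTop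
      (𝓝 (∑' p : Nat.Primes, negLogTail (p : ℝ)⁻¹)) := by
    have hsum : Summable fun p : Nat.Primes => negLogTail (p : ℝ)⁻¹ := by
      simpa only [rpow_neg_one] using summable_negLogTail_prime_rpow le_rfl
    have hnat := (Nat.Primes.hasSum_iff_hasSum_ite
      (f := fun n => negLogTail (n : ℝ)⁻¹)).1 hsum.hasSum
    refine (hnat.tendsto_sum_nat.comp (tendsto_add_atTop_nat 1)).congr fun N => ?_
    exact sum_range_succ_ite_prime _ N
  have hlim := htail.add tendsto_sum_primesLE_inv_sub_log_log
  rw [add_sub_cancel] at hlim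
  refine hlim.congr fun N => ?_
  rw [← add_sub_assoc, ← Finset.sum_add_distrib]
  simp only [negLogTail, sub_add_cancel, one_div]

theorem tendsto_prod_primesLE_div_exp_mul_log :
    Tendsto (fun N : ℕ => (∏ p ∈ N.primesLE, (1 - 1 / (p : ℝ))⁻¹) /
      (exp eulerMascheroniConstant * log N)) atTop (𝓝 1) := by
  have hlim := (tendsto_sum_primesLE_neg_log_sub_log_log.sub_const eulerMascheroniConstant).rexp
  rw [sub_self, exp_zero] at hlim
  refine hlim.congr' ?_
  filter_upwards [eventually_gt_atTop 1] with N hN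
  have hlogN : 0 < log N := log_pos (by exact_mod_cast hN)
  rw [sub_sub, exp_sub, exp_add, exp_log hlogN, exp_sum, mul_comm (log _)]
  congr 1
  refine Finset.prod_congr rfl fun p hp => ?_
  have hp1 : 1 / (p : ℝ) < 1 := by
    rw [one_div]
    exact inv_lt_one_of_one_lt₀ (by exact_mod_cast Nat.one_lt_of_mem_primesLE hp)
  rw [exp_neg, exp_log (sub_pos.2 hp1)]

end MertensConstant

/-- **Corollary 1.** For every `k ≥ 2`, the sum over `k`-free positive integers `n` all of whose
prime factors are `≤ N` of `1 / (n_{(k-1)-free} · φ(n_{(k-1)-power}))` is asymptotic to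
`e^γ log N` as `N → ∞`. -/
theorem kfree_totient_sum_asymp
    (k : ℕ) (hk : 2 ≤ k) :
    Tendsto
      (fun N : ℕ =>
        (∑' n : {n : ℕ // 0 < n ∧ (∀ p : ℕ, p.Prime → p ∣ n → p ≤ N) ∧ KFree k n},
            (1 : ℝ) / ((freePart (k - 1) (n : ℕ) * Nat.totient (powerPart (k - 1) (n : ℕ)) : ℕ) : ℝ)) /
          (Real.exp Real.eulerMascheroniConstant * Real.log N))
      atTop (nhds 1) := by
  simpa only [tsum_kFree_eq_prod_primesLE hk] using tendsto_prod_primesLE_div_exp_mul_log
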